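/- arXiv:1612.00677 — 5 statements merged into one kernel-verified Lean document; each statement's English description precedes it below -/
import Mathlib

section
/- Let N be a positive integer, let P₀, S ∈ ℝ^{N×N} be symmetric positive semidefinite, and let t ≥ 0. Then the matrix (I + t·P₀S)⁻¹P₀ is symmetric positive semidefinite. -/
open Matrix

/-!
Absorb `t` into `S` and write `A = 1 + P * S`. If `A *ᵥ x = 0`, then `x = -P *ᵥ (S *ᵥ x)`, so the
nonnegative number `xᴴSx` equals `-(Sx)ᴴP(Sx) ≤ 0`. Hence `xᴴSx = 0`, which forces `S *ᵥ x = 0` and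
then `x = 0`; thus `A` is invertible. Since `P * Aᴴ = P + P * S * P`, the matrix
`A⁻¹ * P = A⁻¹ * (P * Aᴴ) * (A⁻¹)ᴴ` is congruent to a sum of two positive semidefinite matrices.
-/

variable {n : Type*} [Fintype n] [DecidableEq n]

section CommRing

variable {R : Type*} [CommRing R] [StarRing R] {P S : Matrix n n R}

lemma mul_conjTranspose_one_add_mul (hP : P.IsHermitian) (hS : S.IsHermitian) :
    P * (1 + P * S)ᴴ = P + P * S * P := by
  rw [conjTranspose_add, conjTranspose_one, conjTranspose_mul, hP.eq, hS.eq, mul_add, mul_one,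
    mul_assoc]

lemma inv_one_add_mul_mul_eq_conj (hP : P.IsHermitian) (hS : S.IsHermitian)
    (hPS : IsUnit (1 + P * S)) :
    (1 + P * S)⁻¹ * P = (1 + P * S)⁻¹ * (P + P * S * P) * ((1 + P * S)⁻¹)ᴴ := by
  have hdet : IsUnit (1 + P * S).det := (isUnit_iff_isUnit_det _).mp hPS
  rw [← mul_conjTranspose_one_add_mul hP hS, mul_assoc, mul_assoc, ← conjTranspose_mul,
    nonsing_inv_mul _ hdet, conjTranspose_one, mul_one]

end CommRing

section RCLike

open scoped ComplexOrder

variable {𝕜 : Type*} [RCLike 𝕜] {P S : Matrix n n 𝕜}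

lemma isUnit_one_add_mul_of_posSemidef (hP : P.PosSemidef) (hS : S.PosSemidef) :
    IsUnit (1 + P * S) := by
  refine mulVec_injective_iff_isUnit.mp <|
    (injective_iff_map_eq_zero (1 + P * S).mulVecLin).mpr fun x hx ↦ ?_
  have hx_eq : x = -(P *ᵥ (S *ᵥ x)) := by
    rw [mulVecLin_apply, add_mulVec, one_mulVec, ← mulVec_mulVec] at hx
    exact eq_neg_of_add_eq_zero_left hx
  have hform : star x ⬝ᵥ (S *ᵥ x) = -(star (S *ᵥ x) ⬝ᵥ (P *ᵥ (S *ᵥ x))) := calc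
    star x ⬝ᵥ (S *ᵥ x) = star (S *ᵥ x) ⬝ᵥ x := by
      rw [star_mulVec, hS.isHermitian.eq, dotProduct_mulVec]
    _ = -(star (S *ᵥ x) ⬝ᵥ (P *ᵥ (S *ᵥ x))) := by
      rw [← dotProduct_neg, ← hx_eq]
  have hform_zero : star x ⬝ᵥ (S *ᵥ x) = 0 :=
    le_antisymm (hform ▸ neg_nonpos.mpr (hP.dotProduct_mulVec_nonneg _))
      (hS.dotProduct_mulVec_nonneg x)
  have hSx : S *ᵥ x = 0 := (hS.dotProduct_mulVec_zero_iff x).mp hform_zero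
  rw [hx_eq, hSx, mulVec_zero, neg_zero]

lemma posSemidef_inv_one_add_mul_mul (hP : P.PosSemidef) (hS : S.PosSemidef) :
    ((1 + P * S)⁻¹ * P).PosSemidef := by
  have hPSP : (P * S * P).PosSemidef := by
    simpa only [hP.isHermitian.eq] using hS.mul_mul_conjTranspose_same P
  rw [inv_one_add_mul_mul_eq_conj hP.isHermitian hS.isHermitian
    (isUnit_one_add_mul_of_posSemidef hP hS)]
  exact (hP.add hPSP).mul_mul_conjTranspose_same _

theorem nonlinear_subproblem_solution_posSemidef_general {P₀ : Matrix n n 𝕜}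
    (hP₀ : P₀.PosSemidef) (hS : S.PosSemidef) {t : ℝ} (ht : 0 ≤ t) :
    ((1 + t • (P₀ * S))⁻¹ * P₀).PosSemidef := by
  rw [← mul_smul_comm]
  exact posSemidef_inv_one_add_mul_mul hP₀ (hS.smul ht)

end RCLike

/-- If `P₀` and `S` are symmetric positive semidefinite and `t ≥ 0`, then the
value `(I + t·P₀S)⁻¹ P₀` of the closed-form solution of `Ṗ = −PSP` is
symmetric positive semidefinite. -/
theorem nonlinear_subproblem_solution_posSemidef
    (N : ℕ) (hN : 0 < N) (P₀ S : Matrix (Fin N) (Fin N) ℝ)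
    (hP₀ : P₀.PosSemidef) (hS : S.PosSemidef) (t : ℝ) (ht : 0 ≤ t) :
    ((1 + t • (P₀ * S))⁻¹ * P₀).PosSemidef :=
  nonlinear_subproblem_solution_posSemidef_general hP₀ hS ht
end

section
/- Let N, r be positive integers, let Z ∈ ℝ^{N×r}, let S ∈ ℝ^{N×N} be symmetric positive semidefinite, and let h ≥ 0. Then the r×r matrix I_r + h·ZᵀSZ is symmetric positive definite (in particular invertible), the N×N matrix I_N + h·ZZᵀS is invertible, and (I_N + h·ZZᵀS)⁻¹ · ZZᵀ = Z · (I_r + h·ZᵀSZ)⁻¹ · Zᵀ. -/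
open Matrix

/-!
With `A = Z` and `B = h • (Zᴴ * S)`, the two matrices to invert are `1 + A * B` and `1 + B * A`.
They have the same determinant, and the push-through identity `(1 + A * B) * A = A * (1 + B * A)`
lets `A` move across the inverse; multiplying by `Zᴴ` on the right gives the factorization.
-/

section PushThrough

variable {m n R : Type*} [Fintype m] [Fintype n] [DecidableEq m] [DecidableEq n]

theorem one_add_mul_mul_comm [Semiring R] (A : Matrix m n R) (B : Matrix n m R) :
    (1 + A * B) * A = A * (1 + B * A) := by
  rw [Matrix.add_mul, Matrix.mul_add, Matrix.one_mul, Matrix.mul_one, Matrix.mul_assoc]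

variable [CommRing R]

theorem isUnit_one_add_mul_comm (A : Matrix m n R) (B : Matrix n m R) :
    IsUnit (1 + A * B) ↔ IsUnit (1 + B * A) := by
  rw [isUnit_iff_isUnit_det, isUnit_iff_isUnit_det, det_one_add_mul_comm]

theorem inv_one_add_mul_mul_comm {A : Matrix m n R} {B : Matrix n m R}
    (hBA : IsUnit (1 + B * A)) :
    (1 + A * B)⁻¹ * A = A * (1 + B * A)⁻¹ := by
  have hAB : IsUnit (1 + A * B) := (isUnit_one_add_mul_comm A B).2 hBA
  rw [isUnit_iff_isUnit_det] at hAB hBA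
  calc (1 + A * B)⁻¹ * A
      = (1 + A * B)⁻¹ * (A * (1 + B * A) * (1 + B * A)⁻¹) := by
        rw [mul_nonsing_inv_cancel_right _ _ hBA]
    _ = (1 + A * B)⁻¹ * ((1 + A * B) * (A * (1 + B * A)⁻¹)) := by
        rw [← one_add_mul_mul_comm, Matrix.mul_assoc]
    _ = A * (1 + B * A)⁻¹ := nonsing_inv_mul_cancel_left _ _ hAB

end PushThrough

theorem woodbury_zz_general {m n K : Type*} [Fintype m] [Fintype n] [DecidableEq m]
    [DecidableEq n] [Field K] [PartialOrder K] [StarRing K] [StarOrderedRing K]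
    (Z : Matrix m n K) {S : Matrix m m K} (hS : S.PosSemidef) {h : K} (hh : 0 ≤ h) :
    (1 + h • (Zᴴ * S * Z)).PosDef ∧
      IsUnit (1 + h • (Z * Zᴴ * S)) ∧
      (1 + h • (Z * Zᴴ * S))⁻¹ * (Z * Zᴴ)
        = Z * (1 + h • (Zᴴ * S * Z))⁻¹ * Zᴴ := by
  have posDef_small : (1 + h • (Zᴴ * S * Z)).PosDef :=
    PosDef.one.add_posSemidef ((hS.conjTranspose_mul_mul_same Z).smul hh)
  have small_eq : h • (Zᴴ * S * Z) = h • (Zᴴ * S) * Z := (smul_mul _ _ _).symm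
  have large_eq : h • (Z * Zᴴ * S) = Z * h • (Zᴴ * S) := by
    rw [Matrix.mul_smul, Matrix.mul_assoc]
  have isUnit_small : IsUnit (1 + h • (Zᴴ * S) * Z) := small_eq ▸ posDef_small.isUnit
  refine ⟨posDef_small, ?_, ?_⟩
  · rw [large_eq]
    exact (isUnit_one_add_mul_comm _ _).2 isUnit_small
  · rw [large_eq, small_eq, ← Matrix.mul_assoc, inv_one_add_mul_mul_comm isUnit_small]

/-- Low-rank formulation in the `ZZᵀ` setting: for `S` symmetric positive
semidefinite and `h ≥ 0`, the matrix `I_r + h·ZᵀSZ` is symmetric positive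
definite (in particular invertible), `I_N + h·ZZᵀS` is invertible, and
`(I_N + h·ZZᵀS)⁻¹ · ZZᵀ = Z · (I_r + h·ZᵀSZ)⁻¹ · Zᵀ`. -/
theorem woodbury_zz
    (N r : ℕ) (hN : 0 < N) (hr : 0 < r)
    (Z : Matrix (Fin N) (Fin r) ℝ) (S : Matrix (Fin N) (Fin N) ℝ)
    (hS : S.PosSemidef) (h : ℝ) (hh : 0 ≤ h) :
    (1 + h • (Zᵀ * S * Z)).PosDef ∧
      IsUnit (1 + h • (Z * Zᵀ * S)) ∧
      (1 + h • (Z * Zᵀ * S))⁻¹ * (Z * Zᵀ)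
        = Z * (1 + h • (Zᵀ * S * Z))⁻¹ * Zᵀ := by
  simpa only [conjTranspose_eq_transpose_of_trivial] using woodbury_zz_general Z hS hh
end

section
/- Let N, r, r_Q be positive integers, let A, S ∈ ℝ^{N×N}, let L ∈ ℝ^{N×r}, D ∈ ℝ^{r×r}, L_Q ∈ ℝ^{N×r_Q}, D_Q ∈ ℝ^{r_Q×r_Q}, and set P = LDLᵀ and Q = L_Q D_Q L_Qᵀ. Then the right-hand side of the differential Riccati equation admits the low-rank factorization AᵀP + PA + Q − PSP = L̃·D̃·L̃ᵀ, where L̃ = [AᵀL L L_Q] ∈ ℝ^{N×(2r+r_Q)} is the block matrix with column blocks AᵀL, L, L_Q, and D̃ ∈ ℝ^{(2r+r_Q)×(2r+r_Q)} is the block matrix with blocks D̃₁₂ = D̃₂₁ = D, D̃₂₂ = −D·LᵀSL·D, D̃₃₃ = D_Q, and all other blocks zero. -/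
open Matrix

/-!
With `X = LDM`, the three terms of `BX + XA - XSX` are `(BL)·D·M`, `L·D·(MA)` and
`L·(D(MSL)D)·M`: their left factors lie in `{BL, L}` and their right factors in `{MA, M}`, so the
middle factors are the blocks of a single core matrix. A factored `Q` adds one further diagonal
block. In the case `B = Aᵀ`, `M = Lᵀ` the right factor is the transpose of the left one.
-/

section BlockProducts

variable {m n r₁ r₂ s₁ s₂ R : Type*} [Fintype r₁] [Fintype r₂] [Fintype s₁] [Fintype s₂]
  [Semiring R]

lemma fromCols_mul_fromBlocks_mul_fromRows
    (U₁ : Matrix m r₁ R) (U₂ : Matrix m r₂ R)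
    (C₁₁ : Matrix r₁ s₁ R) (C₁₂ : Matrix r₁ s₂ R) (C₂₁ : Matrix r₂ s₁ R) (C₂₂ : Matrix r₂ s₂ R)
    (V₁ : Matrix s₁ n R) (V₂ : Matrix s₂ n R) :
    fromCols U₁ U₂ * fromBlocks C₁₁ C₁₂ C₂₁ C₂₂ * fromRows V₁ V₂ =
      U₁ * C₁₁ * V₁ + U₂ * C₂₁ * V₁ + (U₁ * C₁₂ * V₂ + U₂ * C₂₂ * V₂) := by
  rw [fromCols_mul_fromBlocks, fromCols_mul_fromRows, Matrix.add_mul, Matrix.add_mul]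

lemma fromCols_mul_fromBlocks_zero₁₂_zero₂₁_mul_fromRows
    (U₁ : Matrix m r₁ R) (U₂ : Matrix m r₂ R) (C₁ : Matrix r₁ s₁ R) (C₂ : Matrix r₂ s₂ R)
    (V₁ : Matrix s₁ n R) (V₂ : Matrix s₂ n R) :
    fromCols U₁ U₂ * fromBlocks C₁ 0 0 C₂ * fromRows V₁ V₂ = U₁ * C₁ * V₁ + U₂ * C₂ * V₂ := by
  simp only [fromCols_mul_fromBlocks_mul_fromRows, Matrix.mul_zero, Matrix.zero_mul,
    add_zero, zero_add]

end BlockProducts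

section NonsymmetricRiccati

variable {m n r s p q R : Type*} [Fintype m] [Fintype n] [Fintype r] [Fintype s] [Ring R]

lemma riccati_homogeneous_lowrank_factorization
    (B : Matrix m m R) (A : Matrix n n R) (S : Matrix n m R)
    (L : Matrix m r R) (D : Matrix r s R) (M : Matrix s n R)
    (X : Matrix m n R) (hX : X = L * D * M) :
    B * X + X * A - X * S * X =
      fromCols (B * L) L * fromBlocks 0 D D (-(D * (M * S * L) * D)) * fromRows (M * A) M := by
  have left_linear : B * X = B * L * D * M := by simp only [hX, Matrix.mul_assoc]
  have right_linear : X * A = L * D * (M * A) := by simp only [hX, Matrix.mul_assoc]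
  have quadratic : X * S * X = L * (D * (M * S * L) * D) * M := by
    simp only [hX, Matrix.mul_assoc]
  rw [fromCols_mul_fromBlocks_mul_fromRows, left_linear, right_linear, quadratic,
    Matrix.mul_zero, Matrix.zero_mul, Matrix.mul_neg, Matrix.neg_mul]
  abel

theorem riccati_rhs_lowrank_factorization_general [Fintype p] [Fintype q]
    (B : Matrix m m R) (A : Matrix n n R) (S : Matrix n m R)
    (L : Matrix m r R) (D : Matrix r s R) (M : Matrix s n R)
    (LQ : Matrix m p R) (DQ : Matrix p q R) (MQ : Matrix q n R)
    (X Q : Matrix m n R) (hX : X = L * D * M) (hQ : Q = LQ * DQ * MQ) :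
    B * X + X * A + Q - X * S * X =
      fromCols (fromCols (B * L) L) LQ *
        fromBlocks (fromBlocks 0 D D (-(D * (M * S * L) * D))) 0 0 DQ *
        fromRows (fromRows (M * A) M) MQ := by
  rw [fromCols_mul_fromBlocks_zero₁₂_zero₂₁_mul_fromRows,
    ← riccati_homogeneous_lowrank_factorization B A S L D M X hX, ← hQ, add_sub_right_comm]

end NonsymmetricRiccati

/-- Low-rank factorization of the Riccati right-hand side: with `P = LDLᵀ` and
`Q = L_Q D_Q L_Qᵀ`, one has `AᵀP + PA + Q − PSP = L̃·D̃·L̃ᵀ` where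
`L̃ = [AᵀL  L  L_Q]` and `D̃` has blocks `D̃₁₂ = D̃₂₁ = D`, `D̃₂₂ = −D·LᵀSL·D`,
`D̃₃₃ = D_Q`, and all other blocks zero. -/
theorem riccati_rhs_lowrank_factorization
    (N r rQ : ℕ) (hN : 0 < N) (hr : 0 < r) (hrQ : 0 < rQ)
    (A S : Matrix (Fin N) (Fin N) ℝ)
    (L : Matrix (Fin N) (Fin r) ℝ) (D : Matrix (Fin r) (Fin r) ℝ)
    (LQ : Matrix (Fin N) (Fin rQ) ℝ) (DQ : Matrix (Fin rQ) (Fin rQ) ℝ)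
    (P Q : Matrix (Fin N) (Fin N) ℝ)
    (hP : P = L * D * Lᵀ) (hQ : Q = LQ * DQ * LQᵀ)
    (Ltil : Matrix (Fin N) ((Fin r ⊕ Fin r) ⊕ Fin rQ) ℝ)
    (hLtil : Ltil = Matrix.fromCols (Matrix.fromCols (Aᵀ * L) L) LQ)
    (Dtil : Matrix ((Fin r ⊕ Fin r) ⊕ Fin rQ) ((Fin r ⊕ Fin r) ⊕ Fin rQ) ℝ)
    (hDtil : Dtil = Matrix.fromBlocks
        (Matrix.fromBlocks 0 D D (-(D * (Lᵀ * S * L) * D))) 0 0 DQ) :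
    Aᵀ * P + P * A + Q - P * S * P = Ltil * Dtil * Ltilᵀ := by
  rw [hLtil, hDtil, transpose_fromCols, transpose_fromCols, transpose_mul, transpose_transpose]
  exact riccati_rhs_lowrank_factorization_general Aᵀ A S L D Lᵀ LQ DQ LQᵀ P Q hP hQ
end

section
/- Let N be a positive integer, let S, P₀ ∈ ℝ^{N×N}, and let s, t ∈ ℝ be such that I + t·P₀S and I + (s + t)·P₀S are both invertible. Set P₁ = (I + t·P₀S)⁻¹·P₀. Then I + s·P₁S is invertible, with (I + t·P₀S)·(I + s·P₁S) = I + (s + t)·P₀S, and the flow property (I + s·P₁S)⁻¹·P₁ = (I + (s + t)·P₀S)⁻¹·P₀ holds. -/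
open Matrix

/-! The matrix `P₁ = (I + t·P₀S)⁻¹P₀` is the solution of `(I + t·P₀S)P₁ = P₀`. Multiplying
`I + s·P₁S` on the left by `I + t·P₀S` therefore turns `P₁` into `P₀` and gives `I + (s + t)·P₀S`.
The same multiplication carries `(I + s·P₁S)X = P₁` to `(I + (s + t)·P₀S)X = P₀`, so flowing
from `P₁` for time `s` and from `P₀` for time `s + t` leads to the same `X`. -/

section RiccatiFlow

variable {R A : Type*} [CommSemiring R] [Semiring A] [Algebra R A]

/-- The operator `T_G(t)P = (1 + t·PS)⁻¹P` in an arbitrary algebra; for real matrices it is the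
closed-form solution of the Riccati subproblem `Ṗ = −PSP` with initial value `P`. The inverse is
`Ring.inverse`, so the value is `0` when `1 + t·PS` is not a unit. -/
noncomputable def riccatiFlow (S : A) (t : R) (P : A) : A :=
  Ring.inverse (1 + t • (P * S)) * P

variable {S P : A} {s t : R}

lemma riccatiFlow_eq_iff {X : A} (ht : IsUnit (1 + t • (P * S))) :
    riccatiFlow S t P = X ↔ P = (1 + t • (P * S)) * X :=
  Ring.inverse_mul_eq_iff_eq_mul _ _ _ ht

lemma one_add_smul_mul_riccatiFlow (ht : IsUnit (1 + t • (P * S))) :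
    (1 + t • (P * S)) * riccatiFlow S t P = P :=
  ((riccatiFlow_eq_iff ht).1 rfl).symm

lemma one_add_smul_mul_one_add_smul_riccatiFlow (ht : IsUnit (1 + t • (P * S))) :
    (1 + t • (P * S)) * (1 + s • (riccatiFlow S t P * S)) = 1 + (s + t) • (P * S) :=
  calc
    (1 + t • (P * S)) * (1 + s • (riccatiFlow S t P * S))
    _ = 1 + t • (P * S) + s • ((1 + t • (P * S)) * riccatiFlow S t P * S) := by
      rw [mul_add, mul_one, mul_smul_comm, mul_assoc]
    _ = 1 + t • (P * S) + s • (P * S) := by rw [one_add_smul_mul_riccatiFlow ht]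
    _ = 1 + (s + t) • (P * S) := by rw [add_assoc, ← add_smul, add_comm t s]

lemma isUnit_one_add_smul_riccatiFlow (ht : IsUnit (1 + t • (P * S)))
    (hst : IsUnit (1 + (s + t) • (P * S))) : IsUnit (1 + s • (riccatiFlow S t P * S)) :=
  ht.mul_left_iff.1 <| (one_add_smul_mul_one_add_smul_riccatiFlow ht).symm ▸ hst

lemma riccatiFlow_riccatiFlow (ht : IsUnit (1 + t • (P * S)))
    (hst : IsUnit (1 + (s + t) • (P * S))) :
    riccatiFlow S s (riccatiFlow S t P) = riccatiFlow S (s + t) P := by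
  have hs : IsUnit (1 + s • (riccatiFlow S t P * S)) := isUnit_one_add_smul_riccatiFlow ht hst
  rw [eq_comm, riccatiFlow_eq_iff hst, ← one_add_smul_mul_one_add_smul_riccatiFlow ht, mul_assoc,
    one_add_smul_mul_riccatiFlow hs, one_add_smul_mul_riccatiFlow ht]

theorem nonlinear_subproblem_flow_property_general (S P₀ : A) (s t : R)
    (ht : IsUnit (1 + t • (P₀ * S))) (hst : IsUnit (1 + (s + t) • (P₀ * S))) :
    IsUnit (1 + s • (riccatiFlow S t P₀ * S)) ∧
      (1 + t • (P₀ * S)) * (1 + s • (riccatiFlow S t P₀ * S)) = 1 + (s + t) • (P₀ * S) ∧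
      riccatiFlow S s (riccatiFlow S t P₀) = riccatiFlow S (s + t) P₀ :=
  ⟨isUnit_one_add_smul_riccatiFlow ht hst, one_add_smul_mul_one_add_smul_riccatiFlow ht,
    riccatiFlow_riccatiFlow ht hst⟩

end RiccatiFlow

/-- Flow property of the closed-form solution operator `T_G(t)P₀ = (I + t·P₀S)⁻¹P₀`
of the nonlinear subproblem `Ṗ = −PSP`: with `P₁ = (I + t·P₀S)⁻¹P₀`, the matrix
`I + s·P₁S` is invertible, `(I + t·P₀S)(I + s·P₁S) = I + (s+t)·P₀S`, and
`(I + s·P₁S)⁻¹P₁ = (I + (s+t)·P₀S)⁻¹P₀`. -/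
theorem nonlinear_subproblem_flow_property
    (N : ℕ) (hN : 0 < N) (S P₀ : Matrix (Fin N) (Fin N) ℝ) (s t : ℝ)
    (ht : IsUnit (1 + t • (P₀ * S))) (hst : IsUnit (1 + (s + t) • (P₀ * S)))
    (P₁ : Matrix (Fin N) (Fin N) ℝ) (hP₁ : P₁ = (1 + t • (P₀ * S))⁻¹ * P₀) :
    IsUnit (1 + s • (P₁ * S)) ∧
      (1 + t • (P₀ * S)) * (1 + s • (P₁ * S)) = 1 + (s + t) • (P₀ * S) ∧
      (1 + s • (P₁ * S))⁻¹ * P₁ = (1 + (s + t) • (P₀ * S))⁻¹ * P₀ := by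
  simp only [hP₁, nonsing_inv_eq_ringInverse]
  exact nonlinear_subproblem_flow_property_general S P₀ s t ht hst
end

section
/- Let N be a positive integer, let A, Q, P₀ ∈ ℝ^{N×N}, and define F(t, X) = exp(tAᵀ)·X·exp(tA) + ∫₀ᵗ exp(uAᵀ)·Q·exp(uA) du for t ∈ ℝ and X ∈ ℝ^{N×N}. Then for all s, t ∈ ℝ, F(s, F(t, P₀)) = F(s + t, P₀). -/
open Matrix

attribute [local instance] Matrix.frobeniusNormedAddCommGroup Matrix.frobeniusNormedSpace

/-!
`F(t, ·)` is the variation-of-constants formula `x ↦ T(t)x + ∫₀ᵗ T(u)q du` for the operators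
`T(t)X = exp(tAᵀ) X exp(tA)`, which satisfy `T(s + t) = T(s)T(t)`. Hence
`T(s) ∫₀ᵗ T(u)q du = ∫₀ᵗ T(s + u)q du = ∫ₛ^{s+t} T(u)q du`, and adding `∫₀ˢ T(u)q du` completes
the integral to `[0, s + t]`.
-/

open MeasureTheory NormedSpace

section AffineFlow

variable {E : Type*} [NormedAddCommGroup E] [NormedSpace ℝ E]

/-- The variation-of-constants formula `t, x ↦ T(t)x + ∫₀ᵗ T(u)q du`. For a strongly continuous
family of operators `T` with `T(s + t) = T(s)T(t)` and `T(0) = 1`, it is the mild solution at time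
`t` of `ẋ = Gx + q`, `x(0) = x`, where `G` is the generator of `T`. -/
noncomputable def affineFlow (T : ℝ → E →L[ℝ] E) (q : E) (t : ℝ) (x : E) : E :=
  T t x + ∫ u in (0 : ℝ)..t, T u q

variable [CompleteSpace E] {T : ℝ → E →L[ℝ] E} {q : E}

theorem apply_integral_orbit (hT : ∀ s t, T (s + t) = T s ∘L T t) {a b : ℝ}
    (hq : IntervalIntegrable (fun u ↦ T u q) volume a b) (s : ℝ) :
    T s (∫ u in a..b, T u q) = ∫ u in (s + a)..(s + b), T u q :=
  calc
    T s (∫ u in a..b, T u q) = ∫ u in a..b, T s (T u q) :=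
      ((T s).intervalIntegral_comp_comm hq).symm
    _ = ∫ u in a..b, T (s + u) q := by simp only [hT, ContinuousLinearMap.comp_apply]
    _ = ∫ u in (s + a)..(s + b), T u q :=
      intervalIntegral.integral_comp_add_left (fun u ↦ T u q) s

theorem affineFlow_add (hT : ∀ s t, T (s + t) = T s ∘L T t)
    (hq : ∀ a b, IntervalIntegrable (fun u ↦ T u q) volume a b) (s t : ℝ) (x : E) :
    affineFlow T q (s + t) x = affineFlow T q s (affineFlow T q t x) := by
  have integral_split :
      ∫ u in (0 : ℝ)..(s + t), T u q =
        T s (∫ u in (0 : ℝ)..t, T u q) + ∫ u in (0 : ℝ)..s, T u q := by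
    rw [apply_integral_orbit hT (hq 0 t), add_zero, add_comm (∫ u in s..(s + t), T u q),
      intervalIntegral.integral_add_adjacent_intervals (hq 0 s) (hq s (s + t))]
  simp only [affineFlow, integral_split, hT, ContinuousLinearMap.comp_apply, map_add, add_assoc]

end AffineFlow

section BanachAlgebra

variable {𝔸 : Type*} [NormedRing 𝔸] [NormedAlgebra ℝ 𝔸]

/-- The operator `x ↦ exp(ta) x exp(tb)`, which solves the linear Sylvester equation
`ẋ = ax + xb`. -/
noncomputable def expMulLeftRight (a b : 𝔸) (t : ℝ) : 𝔸 →L[ℝ] 𝔸 :=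
  ContinuousLinearMap.mulLeftRight ℝ 𝔸 (exp (t • a)) (exp (t • b))

theorem expMulLeftRight_apply (a b : 𝔸) (t : ℝ) (x : 𝔸) :
    expMulLeftRight a b t x = exp (t • a) * x * exp (t • b) :=
  ContinuousLinearMap.mulLeftRight_apply ℝ 𝔸 _ _ x

variable [CompleteSpace 𝔸]

theorem exp_add_smul (s t : ℝ) (a : 𝔸) : exp ((s + t) • a) = exp (s • a) * exp (t • a) := by
  let := NormedAlgebra.restrictScalars ℚ ℝ 𝔸
  rw [add_smul, exp_add_of_commute (((Commute.refl a).smul_left s).smul_right t)]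

theorem continuous_exp_smul (a : 𝔸) : Continuous fun t : ℝ ↦ exp (t • a) :=
  continuous_iff_continuousAt.2 fun t ↦ (hasDerivAt_exp_smul_const a t).continuousAt

theorem expMulLeftRight_add (a b : 𝔸) (s t : ℝ) :
    expMulLeftRight a b (s + t) = expMulLeftRight a b s ∘L expMulLeftRight a b t := by
  ext x
  simp only [ContinuousLinearMap.comp_apply, expMulLeftRight_apply]
  -- `x` must meet the `t`-factors first, so `exp ((s + t) • b)` splits as `t` then `s`.
  rw [exp_add_smul s t a, add_comm s t, exp_add_smul t s b]
  simp only [mul_assoc]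

theorem continuous_expMulLeftRight_apply (a b x : 𝔸) :
    Continuous fun t ↦ expMulLeftRight a b t x := by
  simp only [expMulLeftRight_apply]
  exact ((continuous_exp_smul a).mul continuous_const).mul (continuous_exp_smul b)

theorem affine_subproblem_flow_property_general (a b q x : 𝔸) (F : ℝ → 𝔸 → 𝔸)
    (hF : ∀ t y, F t y =
      exp (t • a) * y * exp (t • b) + ∫ u in (0 : ℝ)..t, exp (u • a) * q * exp (u • b))
    (s t : ℝ) : F s (F t x) = F (s + t) x := by
  have F_eq : F = affineFlow (expMulLeftRight a b) q := by
    ext t y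
    simp only [hF, affineFlow, expMulLeftRight_apply]
  rw [F_eq, affineFlow_add (expMulLeftRight_add a b) fun _ _ ↦
    (continuous_expMulLeftRight_apply a b q).intervalIntegrable _ _]

end BanachAlgebra

/-- Flow (semigroup) property of the closed-form solution operator
`F(t, X) = exp(tAᵀ)·X·exp(tA) + ∫₀ᵗ exp(uAᵀ)·Q·exp(uA) du` of the affine
subproblem `Ṗ = AᵀP + PA + Q`: `F(s, F(t, P₀)) = F(s + t, P₀)`. -/
theorem affine_subproblem_flow_property
    (N : ℕ) (hN : 0 < N) (A Q P₀ : Matrix (Fin N) (Fin N) ℝ)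
    (F : ℝ → Matrix (Fin N) (Fin N) ℝ → Matrix (Fin N) (Fin N) ℝ)
    (hF : ∀ (t : ℝ) (X : Matrix (Fin N) (Fin N) ℝ), F t X =
        NormedSpace.exp (t • Aᵀ) * X * NormedSpace.exp (t • A)
          + ∫ u in (0:ℝ)..t,
              NormedSpace.exp (u • Aᵀ) * Q * NormedSpace.exp (u • A)) :
    ∀ s t : ℝ, F s (F t P₀) = F (s + t) P₀ := by
  let := Matrix.frobeniusNormedRing (m := Fin N) (α := ℝ)
  let := Matrix.frobeniusNormedAlgebra (m := Fin N) (R := ℝ) (α := ℝ)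
  exact affine_subproblem_flow_property_general Aᵀ A Q P₀ F hF
end
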